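/- Let K[ω] be the tournament with vertex set ℕ×{0,1} whose edges are: ((x,0),(y,0)) for x < y, ((x,0),(x,1)) for all x, and, for all x < y, ((y,1),(x,1)), ((y,1),(x,0)), ((x,1),(y,0)). Then φ_{K[ω]}(n) = 2^{n−2} for every n ≥ 2. -/

import Mathlib

/-! The isomorphism classes of `(n+1)`-element subtournaments of `K[ω]` are in bijection with
pairs (isomorphism class of `n`-element subtournaments, Boolean) as soon as `n ≥ 2`; together with
the fact that all two-element tournaments are isomorphic this gives `2 ^ (n - 2)`.

The bijection is given by two ways of enlarging a finite tournament `s` by one vertex: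

* `true`: add a source to `s`;
* `false`: if `s` has no source, add a sink; if `s` has a source, so that `s` is a tournament `A`
  with a source added, replace `s` by the tournament `p → q → A → p` with two new vertices `p`
  and `q` (thus deleting the source of `s` and adding two vertices).

This is the relation `Step` below. The result has a source exactly in the first case, and a sink
but no source when a sink was added, so that the three cases can be told apart. The source, the
sink and, when `A` has at least two elements, the pair `(p, q)` are determined by the tournament;
hence the enlargement determines `s` up to isomorphism (`Step.inj`).
Every subtournament of `K[ω]` with at least two vertices arises in this way (`exists_step_to`):
look at its largest first coordinate `N`. If only `(N, 1)` is present it is a source, if only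
`(N, 0)` is present it is a sink, and otherwise `(N, 0) → (N, 1) → A → (N, 0)`, where `A` is the
set of the remaining vertices. Conversely every enlargement can be carried out inside `K[ω]`, using
vertices whose first coordinate is large (`exists_step_from`). -/


universe u v

/-- `r` is a tournament relation on `V`: irreflexive and, for distinct vertices,
exactly one of the two directed edges is present. -/
def IsTournament {V : Type u} (r : V → V → Prop) : Prop :=
  (∀ x, ¬ r x x) ∧ ∀ x y : V, x ≠ y → (r x y ↔ ¬ r y x)

/-- A subset `A` is autonomous in the tournament `r`. -/
def Autonomous {V : Type u} (r : V → V → Prop) (A : Set V) : Prop :=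
  ∀ x ∈ A, ∀ x' ∈ A, ∀ y ∉ A, (r x y ↔ r x' y)

/-- A subset `A` is acyclic: it contains no 3-cycle. -/
def AcyclicSet {V : Type u} (r : V → V → Prop) (A : Set V) : Prop :=
  ¬ ∃ a ∈ A, ∃ b ∈ A, ∃ c ∈ A, r a b ∧ r b c ∧ r c a

/-- The acyclic component of a vertex `x`: the union of all acyclic autonomous
subsets containing `x`. -/
def acyclicComponent {V : Type u} (r : V → V → Prop) (x : V) : Set V :=
  ⋃₀ {A : Set V | x ∈ A ∧ Autonomous r A ∧ AcyclicSet r A}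

/-- `A` is an acyclic component of the tournament `r`. -/
def IsAcyclicComponent {V : Type u} (r : V → V → Prop) (A : Set V) : Prop :=
  ∃ x, A = acyclicComponent r x

/-- A tournament is acyclically indecomposable if every acyclic autonomous subset
has at most one element. -/
def AcyclicallyIndecomposable {V : Type u} (r : V → V → Prop) : Prop :=
  ∀ A : Set V, Autonomous r A → AcyclicSet r A → A.Subsingleton

/-- The type of acyclic components of `r`. -/
def AcComp {V : Type u} (r : V → V → Prop) : Type u :=
  {A : Set V // IsAcyclicComponent r A}

/-- The quotient tournament `Ť` on the set of acyclic components. -/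
def quotRel {V : Type u} (r : V → V → Prop) : AcComp r → AcComp r → Prop :=
  fun A B => A ≠ B ∧ ∃ x ∈ A.val, ∃ y ∈ B.val, r x y

/-- The lexicographical sum of the tournaments `rels i` indexed by the tournament `d`. -/
def lexSumRel {I : Type u} {F : I → Type v} (d : I → I → Prop)
    (rels : ∀ i, F i → F i → Prop) : (Σ i, F i) → (Σ i, F i) → Prop :=
  fun p q => (p.1 ≠ q.1 ∧ d p.1 q.1) ∨
    ∃ h : p.1 = q.1, rels q.1 (cast (congrArg F h) p.2) q.2

/-- The subtournaments induced on the finite sets `s` and `t` are isomorphic. -/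
def InducedIso {V : Type u} (r : V → V → Prop) (s t : Finset V) : Prop :=
  ∃ e : {x // x ∈ s} ≃ {x // x ∈ t},
    ∀ a b : {x // x ∈ s}, r a.val b.val ↔ r (e a).val (e b).val

/-- The profile of a tournament: the number of isomorphism classes of subtournaments
induced on `n`-element subsets of the vertex set. -/
noncomputable def profile {V : Type u} (r : V → V → Prop) (n : ℕ) : ℕ :=
  Nat.card (Quot (fun s t : {w : Finset V // w.card = n} => InducedIso r s.val t.val))

/-- `r` is (isomorphic to) a lexicographical sum of acyclic tournaments indexed by a
finite tournament. -/
def IsFiniteLexSumOfAcyclic {V : Type u} (r : V → V → Prop) : Prop :=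
  ∃ (I : Type) (d : I → I → Prop) (F : I → Type u)
    (rels : ∀ i, F i → F i → Prop),
    Finite I ∧ IsTournament d ∧
    (∀ i, IsTournament (rels i) ∧ AcyclicSet (rels i) Set.univ) ∧
    ∃ e : V ≃ (Σ i, F i), ∀ x y, r x y ↔ lexSumRel d rels (e x) (e y)

/-- A bundled tournament (vertex type together with its edge relation). -/
structure Tour : Type 1 where
  V : Type
  rel : V → V → Prop

/-- `S` is embeddable in the tournament `r`: `S` is isomorphic to a subtournament of `r`. -/
def Tour.EmbedsIn {W : Type u} (S : Tour) (r : W → W → Prop) : Prop :=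
  ∃ f : S.V → W, Function.Injective f ∧ ∀ x y, S.rel x y ↔ r (f x) (f y)

/-- The profile of a bundled tournament. -/
noncomputable def Tour.profile (T : Tour) (n : ℕ) : ℕ := _root_.profile T.rel n

/-- The quotient tournament `Ť` of a bundled tournament, on its acyclic components. -/
def Tour.check (T : Tour) : Tour := ⟨AcComp T.rel, quotRel T.rel⟩

/-- The tournament `C3[C]` for an acyclic tournament `C = (A, lt)`. -/
def c3Rel {A : Type} (lt : A → A → Prop) : A × Fin 3 → A × Fin 3 → Prop :=
  fun p q => lt p.1 q.1 ∨ (p.1 = q.1 ∧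
    ((p.2 = 0 ∧ q.2 = 1) ∨ (p.2 = 1 ∧ q.2 = 2) ∨ (p.2 = 2 ∧ q.2 = 0)))

/-- The tournament `V[C]` for an acyclic tournament `C = (A, lt)`; `none` is the extra vertex. -/
def vRel {A : Type} (lt : A → A → Prop) (p q : Option (A × Fin 2)) : Prop :=
  match p, q with
  | some p, some q => lt p.1 q.1 ∨ (p.1 = q.1 ∧ p.2 = 0 ∧ q.2 = 1)
  | none, some q => q.2 = 0
  | some p, none => p.2 = 1
  | none, none => False

/-- The tournament `T[C]` for an acyclic tournament `C = (A, lt)`. -/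
def tRel {A : Type} (lt : A → A → Prop) : A × Fin 2 → A × Fin 2 → Prop :=
  fun p q =>
    (p.2 = 0 ∧ q.2 = 0 ∧ lt p.1 q.1) ∨
    (p.1 = q.1 ∧ p.2 = 0 ∧ q.2 = 1) ∨
    (p.2 = 1 ∧ q.2 = 1 ∧ lt p.1 q.1) ∨
    (p.2 = 1 ∧ q.2 = 0 ∧ lt q.1 p.1) ∨
    (p.2 = 0 ∧ q.2 = 1 ∧ lt q.1 p.1)

/-- The tournament `U[C]` for an acyclic tournament `C = (A, lt)`. -/
def uRel {A : Type} (lt : A → A → Prop) : A × Fin 2 → A × Fin 2 → Prop :=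
  fun p q =>
    (p.2 = 0 ∧ q.2 = 0 ∧ lt p.1 q.1) ∨
    (p.1 = q.1 ∧ p.2 = 0 ∧ q.2 = 1) ∨
    (p.2 = 1 ∧ q.2 = 1 ∧ lt q.1 p.1) ∨
    (p.2 = 0 ∧ q.2 = 1 ∧ lt p.1 q.1) ∨
    (p.2 = 1 ∧ q.2 = 0 ∧ lt p.1 q.1)

/-- The tournament `H[C]` for an acyclic tournament `C = (A, lt)`. -/
def hRel {A : Type} (lt : A → A → Prop) : A × Fin 2 → A × Fin 2 → Prop :=
  fun p q =>
    (p.2 = 0 ∧ q.2 = 0 ∧ lt p.1 q.1) ∨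
    (p.1 = q.1 ∧ p.2 = 0 ∧ q.2 = 1) ∨
    (p.2 = 1 ∧ q.2 = 1 ∧ lt p.1 q.1) ∨
    (p.2 = 1 ∧ q.2 = 0 ∧ lt q.1 p.1) ∨
    (p.2 = 1 ∧ q.2 = 0 ∧ lt p.1 q.1)

/-- The tournament `K[C]` for an acyclic tournament `C = (A, lt)`. -/
def kRel {A : Type} (lt : A → A → Prop) : A × Fin 2 → A × Fin 2 → Prop :=
  fun p q =>
    (p.2 = 0 ∧ q.2 = 0 ∧ lt p.1 q.1) ∨
    (p.1 = q.1 ∧ p.2 = 0 ∧ q.2 = 1) ∨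
    (p.2 = 1 ∧ q.2 = 1 ∧ lt q.1 p.1) ∨
    (p.2 = 1 ∧ q.2 = 0 ∧ lt q.1 p.1) ∨
    (p.2 = 1 ∧ q.2 = 0 ∧ lt p.1 q.1)

def c3Tour (A : Type) (lt : A → A → Prop) : Tour := ⟨A × Fin 3, c3Rel lt⟩
def vTour (A : Type) (lt : A → A → Prop) : Tour := ⟨Option (A × Fin 2), vRel lt⟩
def tTour (A : Type) (lt : A → A → Prop) : Tour := ⟨A × Fin 2, tRel lt⟩
def uTour (A : Type) (lt : A → A → Prop) : Tour := ⟨A × Fin 2, uRel lt⟩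
def hTour (A : Type) (lt : A → A → Prop) : Tour := ⟨A × Fin 2, hRel lt⟩
def kTour (A : Type) (lt : A → A → Prop) : Tour := ⟨A × Fin 2, kRel lt⟩

/-- The order type `ω`: the natural numbers with the usual strict order. -/
def omegaLT : ℕ → ℕ → Prop := fun m n => m < n

/-- The order type `ω*`: the natural numbers with the reversed strict order. -/
def omegaStarLT : ℕ → ℕ → Prop := fun m n => n < m

/-- The set `𝔅` of twelve tournaments. -/
def frakB : List Tour :=
  [c3Tour ℕ omegaLT, vTour ℕ omegaLT, tTour ℕ omegaLT,
   uTour ℕ omegaLT, hTour ℕ omegaLT, kTour ℕ omegaLT,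
   c3Tour ℕ omegaStarLT, vTour ℕ omegaStarLT, tTour ℕ omegaStarLT,
   uTour ℕ omegaStarLT, hTour ℕ omegaStarLT, kTour ℕ omegaStarLT]

/-- The set `𝔅_{n̲}` of six tournaments built on the acyclic tournament `({0,…,n−1},<)`. -/
def frakBn (n : ℕ) : List Tour :=
  [c3Tour (Fin n) (· < ·), vTour (Fin n) (· < ·), tTour (Fin n) (· < ·),
   uTour (Fin n) (· < ·), hTour (Fin n) (· < ·), kTour (Fin n) (· < ·)]

/-! ### One-vertex enlargements of finite tournaments -/

section Iso

variable {V : Type u} {r : V → V → Prop}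

theorem IsTournament.asymm (hr : IsTournament r) {x y : V} (h : r x y) : ¬ r y x := by
  by_cases hne : x = y
  · subst hne
    exact hr.1 x
  · exact (hr.2 _ _ hne).1 h

/-- `f` restricts to an isomorphism between the subtournaments induced on `s` and `t`; the values
of `f` outside `s` are irrelevant. -/
def IsoVia (r : V → V → Prop) (f : V → V) (s t : Finset V) : Prop :=
  (∀ x ∈ s, f x ∈ t) ∧ (∀ x ∈ s, ∀ y ∈ s, f x = f y → x = y) ∧ (∀ y ∈ t, ∃ x ∈ s, f x = y) ∧
    ∀ x ∈ s, ∀ y ∈ s, (r x y ↔ r (f x) (f y))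

theorem inducedIso_iff {s t : Finset V} : InducedIso r s t ↔ ∃ f, IsoVia r f s t := by
  classical
  constructor
  · rintro ⟨e, he⟩
    refine ⟨fun x => if h : x ∈ s then (e ⟨x, h⟩).val else x, ?_, ?_, ?_, ?_⟩
    · intro x hx
      simp [hx]
    · intro x hx y hy hxy
      simp only [hx, hy, dif_pos] at hxy
      simpa using e.injective (Subtype.ext hxy)
    · intro y hy
      exact ⟨(e.symm ⟨y, hy⟩).val, (e.symm ⟨y, hy⟩).2, by simp⟩
    · intro x hx y hy
      simpa [hx, hy] using he ⟨x, hx⟩ ⟨y, hy⟩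
  · rintro ⟨f, h1, h2, h3, h4⟩
    refine ⟨Equiv.ofBijective (fun x => ⟨f x.1, h1 _ x.2⟩) ⟨?_, ?_⟩, ?_⟩
    · intro x y hxy
      exact Subtype.ext (h2 _ x.2 _ y.2 (congrArg Subtype.val hxy))
    · rintro ⟨y, hy⟩
      obtain ⟨x, hx, rfl⟩ := h3 y hy
      exact ⟨⟨x, hx⟩, rfl⟩
    · intro a b
      exact h4 _ a.2 _ b.2

theorem InducedIso.refl (s : Finset V) : InducedIso r s s := ⟨Equiv.refl _, fun _ _ => Iff.rfl⟩

theorem InducedIso.symm {s t : Finset V} (h : InducedIso r s t) : InducedIso r t s := by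
  obtain ⟨e, he⟩ := h
  exact ⟨e.symm, fun a b => by simpa using (he (e.symm a) (e.symm b)).symm⟩

theorem InducedIso.trans {s t w : Finset V} (h : InducedIso r s t) (h' : InducedIso r t w) :
    InducedIso r s w := by
  obtain ⟨e, he⟩ := h
  obtain ⟨e', he'⟩ := h'
  exact ⟨e.trans e', fun a b => (he a b).trans (he' _ _)⟩

theorem InducedIso.card_eq {s t : Finset V} (h : InducedIso r s t) : s.card = t.card := by
  obtain ⟨e, -⟩ := h
  simpa using Fintype.card_congr e

theorem inducedIso_of_card_eq_one (hr : IsTournament r) {s t : Finset V} (hs : s.card = 1)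
    (ht : t.card = 1) : InducedIso r s t := by
  obtain ⟨a, rfl⟩ := Finset.card_eq_one.1 hs
  obtain ⟨b, rfl⟩ := Finset.card_eq_one.1 ht
  have := hr.1
  exact inducedIso_iff.2 ⟨fun _ => b, by simp [IsoVia, this]⟩

/-- The tournament induced on `s` has a source. -/
def HasSrc (r : V → V → Prop) (s : Finset V) : Prop := ∃ p ∈ s, ∀ x ∈ s, x ≠ p → r p x

/-- The tournament induced on `s` has a sink. -/
def HasSink (r : V → V → Prop) (s : Finset V) : Prop := ∃ p ∈ s, ∀ x ∈ s, x ≠ p → r x p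

theorem HasSrc.iso {s t : Finset V} (h : InducedIso r s t) (hs : HasSrc r s) : HasSrc r t := by
  obtain ⟨f, h1, h2, h3, h4⟩ := inducedIso_iff.1 h
  obtain ⟨p, hp, hps⟩ := hs
  refine ⟨f p, h1 p hp, fun y hy hne => ?_⟩
  obtain ⟨x, hx, rfl⟩ := h3 y hy
  exact (h4 _ hp _ hx).1 (hps x hx (by rintro rfl; exact hne rfl))

theorem HasSink.iso {s t : Finset V} (h : InducedIso r s t) (hs : HasSink r s) : HasSink r t := by
  obtain ⟨f, h1, h2, h3, h4⟩ := inducedIso_iff.1 h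
  obtain ⟨p, hp, hps⟩ := hs
  refine ⟨f p, h1 p hp, fun y hy hne => ?_⟩
  obtain ⟨x, hx, rfl⟩ := h3 y hy
  exact (h4 _ hx _ hp).1 (hps x hx (by rintro rfl; exact hne rfl))

theorem quot_mk_eq_iff {n : ℕ} (s t : {w : Finset V // w.card = n}) :
    Quot.mk (fun s t : {w : Finset V // w.card = n} => InducedIso r s.val t.val) s =
      Quot.mk _ t ↔ InducedIso r s.val t.val :=
  Equivalence.quot_mk_eq_iff
    (r := fun s t : {w : Finset V // w.card = n} => InducedIso r s.val t.val)
    ⟨fun s => .refl s.val, fun h => h.symm, fun h h' => h.trans h'⟩ s t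

variable [DecidableEq V]

theorem IsoVia.extend (hr : IsTournament r) {f : V → V} {s t : Finset V} (h : IsoVia r f s t)
    {p q : V} (hp : p ∉ s) (hq : q ∉ t) (hpq : ∀ x ∈ s, (r p x ↔ r q (f x))) :
    IsoVia r (Function.update f p q) (insert p s) (insert q t) := by
  obtain ⟨h1, h2, h3, h4⟩ := h
  obtain ⟨hi, ht⟩ := hr
  have hne : ∀ x ∈ s, x ≠ p := fun x hx hxp => hp (hxp ▸ hx)
  have hne' : ∀ x ∈ s, f x ≠ q := fun x hx hxp => hq (hxp ▸ h1 x hx)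
  refine ⟨?_, ?_, ?_, ?_⟩
  · intro x hx
    by_cases hxp : x = p <;> grind
  · intro x hx y hy
    by_cases hxp : x = p <;> by_cases hyp : y = p <;> grind
  · intro y hy
    rcases Finset.mem_insert.1 hy with rfl | hy
    · exact ⟨p, by simp, by simp⟩
    · obtain ⟨x, hx, rfl⟩ := h3 y hy
      exact ⟨x, by simp [hx], by simp [hne x hx]⟩
  · intro x hx y hy
    rcases Finset.mem_insert.1 hx with hxp | hxs <;> rcases Finset.mem_insert.1 hy with hyp | hys
    · simp [hxp, hyp, hi]
    · simpa [hxp, hne y hys] using hpq y hys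
    · rw [hyp, Function.update_self, Function.update_of_ne (hne x hxs), ht _ _ (hne x hxs),
        ht _ _ (hne' x hxs), hpq x hxs]
    · simpa [hne x hxs, hne y hys] using h4 x hxs y hys

theorem IsoVia.restrict {f : V → V} {s t : Finset V} {p q : V}
    (h : IsoVia r f (insert p s) (insert q t)) (hp : p ∉ s) (hq : q ∉ t) (hpq : f p = q) :
    IsoVia r f s t := by
  obtain ⟨h1, h2, h3, h4⟩ := h
  refine ⟨?_, ?_, ?_, ?_⟩
  · intro x hx
    have := h1 x (by simp [hx])
    have := h2 x (by simp [hx]) p (by simp)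
    grind
  · intro x hx y hy
    exact h2 x (by simp [hx]) y (by simp [hy])
  · intro y hy
    have := h3 y (by simp [hy])
    grind
  · intro x hx y hy
    exact h4 x (by simp [hx]) y (by simp [hy])

/-- `u` is `s` with a source added. -/
def AddSrc (r : V → V → Prop) (s u : Finset V) : Prop :=
  ∃ p, p ∉ s ∧ u = insert p s ∧ ∀ x ∈ s, r p x

/-- `u` is `s` with a sink added. -/
def AddSink (r : V → V → Prop) (s u : Finset V) : Prop :=
  ∃ p, p ∉ s ∧ u = insert p s ∧ ∀ x ∈ s, r x p

/-- `u` is `A` with two vertices `p`, `q` added such that `p → q → A → p`. -/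
def AddCyc (r : V → V → Prop) (A u : Finset V) : Prop :=
  ∃ p q, q ∉ A ∧ p ∉ insert q A ∧ u = insert p (insert q A) ∧ r p q ∧ (∀ x ∈ A, r q x) ∧
    ∀ x ∈ A, r x p

theorem AddSrc.hasSrc {s u : Finset V} (h : AddSrc r s u) : HasSrc r u := by
  obtain ⟨p, hp, rfl, h⟩ := h
  exact ⟨p, by simp, by grind⟩

theorem AddSink.hasSink {s u : Finset V} (h : AddSink r s u) : HasSink r u := by
  obtain ⟨p, hp, rfl, h⟩ := h
  exact ⟨p, by simp, by grind⟩

theorem HasSrc.addSrc {u : Finset V} (h : HasSrc r u) : ∃ s, AddSrc r s u := by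
  obtain ⟨p, hp, h⟩ := h
  exact ⟨u.erase p, p, by simp, by simp [Finset.insert_erase hp], by grind⟩

theorem HasSink.addSink {u : Finset V} (h : HasSink r u) : ∃ s, AddSink r s u := by
  obtain ⟨p, hp, h⟩ := h
  exact ⟨u.erase p, p, by simp, by simp [Finset.insert_erase hp], by grind⟩

theorem AddSink.not_hasSrc (hr : IsTournament r) {s u : Finset V} (h : AddSink r s u)
    (hs : s.Nonempty) (hn : ¬ HasSrc r s) : ¬ HasSrc r u := by
  obtain ⟨p, hp, rfl, h⟩ := h
  obtain ⟨hi, ht⟩ := hr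
  rintro ⟨v, hv, hvs⟩
  rcases Finset.mem_insert.1 hv with rfl | hv
  · obtain ⟨x, hx⟩ := hs
    have hne : x ≠ v := by rintro rfl; exact hp hx
    exact (ht _ _ hne).1 (h x hx) (hvs x (by simp [hx]) hne)
  · exact hn ⟨v, hv, fun x hx => hvs x (by simp [hx])⟩

theorem AddCyc.not_hasSrc (hr : IsTournament r) {A u : Finset V} (h : AddCyc r A u)
    (hs : A.Nonempty) : ¬ HasSrc r u := by
  obtain ⟨p, q, hq, hp, rfl, hpq, h1, h2⟩ := h
  rintro ⟨v, hv, hvs⟩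
  obtain ⟨a, ha⟩ := hs
  have hap : a ≠ p := by rintro rfl; exact hp (by simp [ha])
  have hqp : q ≠ p := by rintro rfl; exact hp (by simp)
  simp only [Finset.mem_insert] at hv
  rcases hv with rfl | rfl | hv
  · exact hr.asymm (h2 a ha) (hvs a (by simp [ha]) hap)
  · exact hr.asymm hpq (hvs p (by simp) hqp.symm)
  · exact hr.asymm (h1 v hv) (hvs q (by simp) (by rintro rfl; exact hq hv))

theorem AddCyc.not_hasSink (hr : IsTournament r) {A u : Finset V} (h : AddCyc r A u)
    (hs : A.Nonempty) : ¬ HasSink r u := by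
  obtain ⟨p, q, hq, hp, rfl, hpq, h1, h2⟩ := h
  rintro ⟨v, hv, hvs⟩
  obtain ⟨a, ha⟩ := hs
  have haq : a ≠ q := by rintro rfl; exact hq ha
  have hqp : q ≠ p := by rintro rfl; exact hp (by simp)
  simp only [Finset.mem_insert] at hv
  rcases hv with rfl | rfl | hv
  · exact hr.asymm hpq (hvs q (by simp) hqp)
  · exact hr.asymm (h1 a ha) (hvs a (by simp [ha]) haq)
  · exact hr.asymm (h2 v hv) (hvs p (by simp) (by rintro rfl; exact hp (by simp [hv])))

theorem AddSrc.congr (hr : IsTournament r) {s t u w : Finset V} (hu : AddSrc r s u)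
    (hw : AddSrc r t w) (h : InducedIso r s t) : InducedIso r u w := by
  obtain ⟨f, hf⟩ := inducedIso_iff.1 h
  obtain ⟨p, hp, rfl, h⟩ := hu
  obtain ⟨q, hq, rfl, h'⟩ := hw
  exact inducedIso_iff.2 ⟨_, hf.extend hr hp hq fun x hx =>
    iff_of_true (h x hx) (h' _ (hf.1 x hx))⟩

theorem AddSink.congr (hr : IsTournament r) {s t u w : Finset V} (hu : AddSink r s u)
    (hw : AddSink r t w) (h : InducedIso r s t) : InducedIso r u w := by
  obtain ⟨f, hf⟩ := inducedIso_iff.1 h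
  obtain ⟨p, hp, rfl, h⟩ := hu
  obtain ⟨q, hq, rfl, h'⟩ := hw
  refine inducedIso_iff.2 ⟨_, hf.extend hr hp hq fun x hx => iff_of_false ?_ ?_⟩
  · exact (hr.2 _ _ (by grind)).1 (h x hx)
  · exact (hr.2 _ _ (by have := hf.1 x hx; grind)).1 (h' _ (hf.1 x hx))

theorem AddCyc.congr (hr : IsTournament r) {A B u w : Finset V} (hu : AddCyc r A u)
    (hw : AddCyc r B w) (h : InducedIso r A B) : InducedIso r u w := by
  obtain ⟨f, hf⟩ := inducedIso_iff.1 h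
  obtain ⟨p, q, hq, hp, rfl, hpq, h1, h2⟩ := hu
  obtain ⟨p', q', hq', hp', rfl, hpq', h1', h2'⟩ := hw
  have hg := hf.extend hr hq hq' fun x hx => iff_of_true (h1 x hx) (h1' _ (hf.1 x hx))
  refine inducedIso_iff.2 ⟨_, hg.extend hr hp hp' fun x hx => ?_⟩
  rcases Finset.mem_insert.1 hx with rfl | hx
  · simp [hpq, hpq']
  · rw [Function.update_of_ne (by grind)]
    have := hf.1 x hx
    exact iff_of_false ((hr.2 _ _ (by grind)).1 (h2 x hx)) ((hr.2 _ _ (by grind)).1 (h2' _ this))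

theorem AddSrc.cancel (hr : IsTournament r) {s t u w : Finset V} (hu : AddSrc r s u)
    (hw : AddSrc r t w) (h : InducedIso r u w) : InducedIso r s t := by
  obtain ⟨f, hf⟩ := inducedIso_iff.1 h
  obtain ⟨p, hp, rfl, hps⟩ := hu
  obtain ⟨q, hq, rfl, h'⟩ := hw
  refine inducedIso_iff.2 ⟨f, hf.restrict hp hq ?_⟩
  -- Two different sources would dominate each other.
  obtain ⟨h1, h2, h3, h4⟩ := hf
  obtain ⟨x, hx, hxq⟩ := h3 q (by simp)
  by_contra hne
  have hxp : x ∈ s := by grind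
  have hfp : f p ∈ t := by grind
  have e1 := (h4 p (by simp) x hx).1 (hps x hxp)
  rw [hxq] at e1
  exact (hr.2 _ _ hne).1 e1 (h' _ hfp)

theorem AddSink.cancel (hr : IsTournament r) {s t u w : Finset V} (hu : AddSink r s u)
    (hw : AddSink r t w) (h : InducedIso r u w) : InducedIso r s t := by
  obtain ⟨f, hf⟩ := inducedIso_iff.1 h
  obtain ⟨p, hp, rfl, hps⟩ := hu
  obtain ⟨q, hq, rfl, h'⟩ := hw
  refine inducedIso_iff.2 ⟨f, hf.restrict hp hq ?_⟩
  obtain ⟨h1, h2, h3, h4⟩ := hf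
  obtain ⟨x, hx, hxq⟩ := h3 q (by simp)
  by_contra hne
  have hxp : x ∈ s := by grind
  have hfp : f p ∈ t := by grind
  have e1 := (h4 x hx p (by simp)).1 (hps x hxp)
  rw [hxq] at e1
  exact (hr.2 _ _ hne).1 (h' _ hfp) e1

/-- If `A` has at least two elements, then `p` is the only vertex with exactly one out-neighbour
such that this out-neighbour has at least two out-neighbours itself; hence an isomorphism
preserves `p` and its out-neighbour `q`. If `A` has one element there is nothing to prove, although
the enlarged tournament is then a 3-cycle and `p` is not determined. -/
theorem AddCyc.cancel (hr : IsTournament r) {A B u w : Finset V} (hu : AddCyc r A u)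
    (hw : AddCyc r B w) (hA : A.Nonempty) (h : InducedIso r u w) : InducedIso r A B := by
  have hcard := h.card_eq
  obtain ⟨f, hf⟩ := inducedIso_iff.1 h
  obtain ⟨p, q, hq, hp, rfl, hpq, hqA, hAp⟩ := hu
  obtain ⟨p', q', hq', hp', rfl, hpq', hqB, hBp⟩ := hw
  simp only [Finset.card_insert_of_notMem, hp, hq, hp', hq', not_false_eq_true] at hcard
  have hAB : A.card = B.card := by omega
  by_cases h1 : A.card = 1
  · exact inducedIso_of_card_eq_one hr h1 (hAB ▸ h1)
  have h2 : 1 < A.card := by have := hA.card_pos; omega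
  have hir := hr.1
  have hasym : ∀ x y, r x y → ¬ r y x := fun x y => hr.asymm
  obtain ⟨g1, g2, g3, g4⟩ := hf
  have hout : ∀ x ∈ insert p (insert q A), r p x → x = q := by grind
  have hout' : ∀ x ∈ insert p' (insert q' B), r p' x → x = q' := by grind
  have hfpq : r (f p) (f q) := (g4 p (by simp) q (by simp)).1 hpq
  -- `f q` is the only out-neighbour of `f p`
  have huniq : ∀ y ∈ insert p' (insert q' B), r (f p) y → y = f q := by
    intro y hy hpy
    obtain ⟨x, hx, rfl⟩ := g3 y hy
    rw [hout x hx ((g4 p (by simp) x hx).2 hpy)]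
  have hfp : f p = p' := by
    rcases Finset.mem_insert.1 (g1 p (by simp)) with h0 | h0
    · exact h0
    exfalso
    rcases Finset.mem_insert.1 h0 with h0 | h0
    · -- here `f p = q'` would have all elements of `B` as out-neighbours
      obtain ⟨b, hb, b', hb', hne⟩ := Finset.one_lt_card.1 (hAB ▸ h2)
      have e1 := huniq b (by simp [hb]) (h0 ▸ hqB b hb)
      have e2 := huniq b' (by simp [hb']) (h0 ▸ hqB b' hb')
      exact hne (e1.trans e2.symm)
    · -- here `f q = p'`, which has only one out-neighbour
      have hfq := huniq p' (by simp) (hBp _ h0)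
      obtain ⟨a, ha, a', ha', hne⟩ := Finset.one_lt_card.1 h2
      have e1 := (g4 q (by simp) a (by simp [ha])).1 (hqA a ha)
      have e2 := (g4 q (by simp) a' (by simp [ha'])).1 (hqA a' ha')
      rw [← hfq] at e1 e2
      have e3 := hout' _ (g1 a (by simp [ha])) e1
      have e4 := hout' _ (g1 a' (by simp [ha'])) e2
      exact hne (g2 a (by simp [ha]) a' (by simp [ha']) (e3.trans e4.symm))
  have hfq : f q = q' := (huniq q' (by simp) (hfp ▸ hpq')).symm
  exact inducedIso_iff.2 ⟨f, (IsoVia.restrict ⟨g1, g2, g3, g4⟩ hp hp' hfp).restrict hq hq' hfq⟩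

/-- `u` arises from `s` by one of the two one-vertex enlargements: for `true` a source is added;
for `false` a sink is added if `s` has no source, and otherwise the source of `s` is deleted and
two vertices `p`, `q` with `p → q → A → p` are added to the rest `A`. -/
def Step (r : V → V → Prop) : Bool → Finset V → Finset V → Prop
  | true, s, u => AddSrc r s u
  | false, s, u => (¬ HasSrc r s ∧ AddSink r s u) ∨ ∃ A, AddSrc r A s ∧ AddCyc r A u

theorem AddSrc.card {s u : Finset V} (h : AddSrc r s u) : u.card = s.card + 1 := by
  obtain ⟨p, hp, rfl, -⟩ := h
  simp [hp]

theorem AddSink.card {s u : Finset V} (h : AddSink r s u) : u.card = s.card + 1 := by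
  obtain ⟨p, hp, rfl, -⟩ := h
  simp [hp]

theorem AddCyc.card {s u : Finset V} (h : AddCyc r s u) : u.card = s.card + 2 := by
  obtain ⟨p, q, hq, hp, rfl, -⟩ := h
  rw [Finset.card_insert_of_notMem hp, Finset.card_insert_of_notMem hq]

theorem Step.card {b : Bool} {s u : Finset V} (h : Step r b s u) : u.card = s.card + 1 := by
  cases b
  · rcases h with ⟨-, h⟩ | ⟨A, h, h'⟩
    · exact h.card
    · rw [h.card, h'.card]
  · exact AddSrc.card h

theorem Step.congr (hr : IsTournament r) {b : Bool} {s t u w : Finset V} (hu : Step r b s u)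
    (hw : Step r b t w) (h : InducedIso r s t) : InducedIso r u w := by
  cases b
  · rcases hu with ⟨hs, hu⟩ | ⟨A, hs, hu⟩ <;> rcases hw with ⟨ht, hw⟩ | ⟨B, ht, hw⟩
    · exact hu.congr hr hw h
    · exact absurd (ht.hasSrc.iso h.symm) hs
    · exact absurd (hs.hasSrc.iso h) ht
    · exact hu.congr hr hw (hs.cancel hr ht h)
  · exact AddSrc.congr hr hu hw h

theorem Step.hasSrc_iff (hr : IsTournament r) {b : Bool} {s u : Finset V} (hu : Step r b s u)
    (hs : 2 ≤ s.card) : HasSrc r u ↔ b = true := by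
  cases b
  · simp only [Bool.false_eq_true, iff_false]
    rcases hu with ⟨hn, hu⟩ | ⟨A, hA, hu⟩
    · exact hu.not_hasSrc hr (Finset.card_pos.1 (by omega)) hn
    · exact hu.not_hasSrc hr (Finset.card_pos.1 (by have := hA.card; omega))
  · simpa using AddSrc.hasSrc hu

theorem Step.inj (hr : IsTournament r) {b c : Bool} {s t u w : Finset V} (hu : Step r b s u)
    (hw : Step r c t w) (hs : 2 ≤ s.card) (h : InducedIso r u w) :
    InducedIso r s t ∧ b = c := by
  have hcard : s.card = t.card := by
    have := h.card_eq; have := hu.card; have := hw.card; omega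
  have hbc : b = c := by
    rw [Bool.eq_iff_iff, ← hu.hasSrc_iff hr hs, ← hw.hasSrc_iff hr (hcard ▸ hs)]
    exact ⟨fun hx => hx.iso h, fun hx => hx.iso h.symm⟩
  subst hbc
  refine ⟨?_, rfl⟩
  cases b
  · rcases hu with ⟨hns, hu⟩ | ⟨A, hA, hu⟩ <;> rcases hw with ⟨hnt, hw⟩ | ⟨B, hB, hw⟩
    · exact hu.cancel hr hw h
    · exact absurd (hu.hasSink.iso h)
        (hw.not_hasSink hr (Finset.card_pos.1 (by have := hB.card; omega)))
    · exact absurd (hw.hasSink.iso h.symm)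
        (hu.not_hasSink hr (Finset.card_pos.1 (by have := hA.card; omega)))
    · exact hA.congr hr hB (hu.cancel hr hw (Finset.card_pos.1 (by have := hA.card; omega)) h)
  · exact AddSrc.cancel hr hu hw h

theorem inducedIso_of_card_eq_two (hr : IsTournament r) {s t : Finset V} (hs : s.card = 2)
    (ht : t.card = 2) : InducedIso r s t := by
  have key : ∀ s : Finset V, s.card = 2 → ∃ a, AddSrc r a s := by
    intro s hs
    obtain ⟨x, y, hne, rfl⟩ := Finset.card_eq_two.1 hs
    by_cases hxy : r x y
    · exact ⟨{y}, x, by simpa using hne, rfl, by simpa using hxy⟩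
    · refine ⟨{x}, y, by simpa using hne.symm, Finset.pair_comm _ _, ?_⟩
      simpa using (hr.2 _ _ hne.symm).2 hxy
  obtain ⟨a, ha⟩ := key s hs
  obtain ⟨b, hb⟩ := key t ht
  exact ha.congr hr hb (inducedIso_of_card_eq_one hr (by have := ha.card; omega)
    (by have := hb.card; omega))

theorem profile_succ (hr : IsTournament r) {n : ℕ} (hn : 2 ≤ n)
    (hfrom : ∀ b (s : Finset V), ∃ u, Step r b s u)
    (hto : ∀ u : Finset V, 2 ≤ u.card → ∃ b s, Step r b s u) :
    profile r (n + 1) = profile r n * 2 := by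
  choose F hF using hfrom
  have hFc : ∀ b (s : {w : Finset V // w.card = n}), (F b s.val).card = n + 1 := fun b s => by
    rw [(hF b s.val).card, s.2]
  let Q (m : ℕ) : Type u :=
    Quot (fun s t : {w : Finset V // w.card = m} => InducedIso r s.val t.val)
  let Φ : Q n × Bool → Q (n + 1) := fun x =>
    Quot.map (fun s => ⟨F x.2 s.val, hFc x.2 s⟩)
      (fun s t h => (hF x.2 s.val).congr hr (hF x.2 t.val) h) x.1
  have hΦ : Function.Bijective Φ := by
    constructor
    · rintro ⟨⟨s⟩, b⟩ ⟨⟨t⟩, c⟩ h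
      have h' := (quot_mk_eq_iff _ _).1 h
      obtain ⟨hst, rfl⟩ := (hF b s.val).inj hr (hF c t.val) (s.2.symm ▸ hn) h'
      exact Prod.ext (Quot.sound hst) rfl
    · rintro ⟨⟨u, hu⟩⟩
      obtain ⟨b, s, hs⟩ := hto u (by omega)
      have hsc : s.card = n := by have := hs.card; omega
      exact ⟨(Quot.mk _ ⟨s, hsc⟩, b), Quot.sound ((hF b s).congr hr hs (.refl s))⟩
  have := Nat.card_eq_of_bijective Φ hΦ
  rw [Nat.card_prod] at this
  simpa [Q, profile] using this.symm

end Iso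

/-! ### Enlargements inside `K[ω]` -/

section KOmega

theorem kRel_isTournament : IsTournament (kRel omegaLT) := by
  constructor
  · rintro ⟨x, i⟩
    simp only [kRel, omegaLT]
    omega
  · rintro ⟨x, i⟩ ⟨y, j⟩ h
    simp only [kRel, omegaLT]
    simp only [ne_eq, Prod.mk.injEq] at h
    omega

theorem exists_step_from (b : Bool) (s : Finset (ℕ × Fin 2)) :
    ∃ u, Step (kRel omegaLT) b s u := by
  obtain ⟨N, hN⟩ : ∃ N, ∀ x ∈ s, x.1 < N :=
    ⟨s.sup Prod.fst + 1, fun x hx => Nat.lt_succ_of_le (Finset.le_sup (f := Prod.fst) hx)⟩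
  have hmem : ∀ i, (N, i) ∉ s := fun i hi => lt_irrefl _ (hN _ hi)
  have h1 : ∀ x ∈ s, kRel omegaLT (N, 1) x := by
    rintro ⟨x, i⟩ hx
    have : x < N := hN _ hx
    fin_cases i <;> simp [kRel, omegaLT, this]
  have h0 : ∀ x ∈ s, kRel omegaLT x (N, 0) := by
    rintro ⟨x, i⟩ hx
    have : x < N := hN _ hx
    fin_cases i <;> simp [kRel, omegaLT, this]
  cases b
  · by_cases hs : HasSrc (kRel omegaLT) s
    · obtain ⟨A, hA⟩ := hs.addSrc
      have hAs : ∀ x ∈ A, x ∈ s := by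
        obtain ⟨p, -, rfl, -⟩ := hA
        intro x hx
        simp [hx]
      refine ⟨_, Or.inr ⟨A, hA, (N, 0), (N, 1), fun h => hmem _ (hAs _ h), ?_, rfl, ?_,
        fun x hx => h1 x (hAs x hx), fun x hx => h0 x (hAs x hx)⟩⟩
      · simpa using fun h => hmem _ (hAs _ h)
      · simp [kRel]
    · exact ⟨_, Or.inl ⟨hs, (N, 0), hmem 0, rfl, h0⟩⟩
  · exact ⟨_, (N, 1), hmem 1, rfl, h1⟩

theorem exists_step_to (u : Finset (ℕ × Fin 2)) (hu : 2 ≤ u.card) :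
    ∃ b s, Step (kRel omegaLT) b s u := by
  have hr := kRel_isTournament
  by_cases hsrc : HasSrc (kRel omegaLT) u
  · obtain ⟨s, hs⟩ := hsrc.addSrc
    exact ⟨true, s, hs⟩
  by_cases hsink : HasSink (kRel omegaLT) u
  · obtain ⟨s, hs⟩ := hsink.addSink
    refine ⟨false, s, Or.inl ⟨?_, hs⟩⟩
    -- a source of `s` also dominates the sink
    rintro ⟨v, hv, hvs⟩
    obtain ⟨p, hp, rfl, h⟩ := hs
    exact hsrc ⟨v, by simp [hv], by grind⟩
  obtain ⟨⟨N, i⟩, hNi, hmax⟩ := u.exists_max_image Prod.fst (Finset.card_pos.1 (by omega))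
  have h1 : ∀ x ∈ u, x ≠ (N, 0) → x ≠ (N, 1) → kRel omegaLT (N, 1) x ∧ kRel omegaLT x (N, 0) := by
    rintro ⟨x, j⟩ hx hx0 hx1
    have : x ≤ N := hmax _ hx
    have : x < N := by
      refine lt_of_le_of_ne this ?_
      rintro rfl
      fin_cases j
      · exact hx0 rfl
      · exact hx1 rfl
    fin_cases j <;> simp [kRel, omegaLT, this]
  have hN : (N, 0) ∈ u ∧ (N, 1) ∈ u := by
    by_cases e0 : (N, 0) ∈ u <;> by_cases e1 : (N, 1) ∈ u
    · exact ⟨e0, e1⟩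
    · exact absurd ⟨_, e0, fun x hx hne => (h1 x hx hne (by grind)).2⟩ hsink
    · exact absurd ⟨_, e1, fun x hx hne => (h1 x hx (by grind) hne).1⟩ hsrc
    · exfalso
      fin_cases i
      · exact e0 hNi
      · exact e1 hNi
  obtain ⟨e0, e1⟩ := hN
  have hne : ((N, 0) : ℕ × Fin 2) ≠ (N, 1) := by simp
  have hA : ∀ x ∈ (u.erase (N, 0)).erase (N, 1),
      kRel omegaLT (N, 1) x ∧ kRel omegaLT x (N, 0) := by
    intro x hx
    simp only [Finset.mem_erase] at hx
    exact h1 x hx.2.2 hx.2.1 hx.1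
  -- the preimage is `u` without `(N, 0)`, whose source is `(N, 1)`
  refine ⟨false, u.erase (N, 0), Or.inr ⟨(u.erase (N, 0)).erase (N, 1),
    ⟨(N, 1), by simp, ?_, fun x hx => (hA x hx).1⟩,
    (N, 0), (N, 1), by simp, by simp, ?_, ?_, fun x hx => (hA x hx).1, fun x hx => (hA x hx).2⟩⟩
  · rw [Finset.insert_erase]
    simp [e1]
  · rw [Finset.insert_erase (by simp [e1]), Finset.insert_erase e0]
  · simp [kRel]

theorem profile_two : profile (kRel omegaLT) 2 = 1 := by
  rw [profile, Nat.card_eq_one_iff_unique]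
  refine ⟨⟨?_⟩, ⟨Quot.mk _ ⟨{(0, 0), (0, 1)}, by simp⟩⟩⟩
  rintro ⟨s⟩ ⟨t⟩
  exact Quot.sound (inducedIso_of_card_eq_two kRel_isTournament s.2 t.2)

end KOmega

/-- The profile of the tournament `K[ω]` satisfies
`φ_{K[ω]}(n) = 2^(n−2)` for every `n ≥ 2`. -/
theorem profile_K_omega (n : ℕ) (hn : 2 ≤ n) :
    profile (kRel omegaLT) n = 2 ^ (n - 2) := by
  induction n, hn using Nat.le_induction with
  | base => simpa using profile_two
  | succ n hn ih =>
    rw [profile_succ kRel_isTournament hn exists_step_from exists_step_to, ih,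
      Nat.sub_add_comm hn, pow_succ]
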